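/- Let C be a Hermitian complex matrix indexed by Fin m × Fin n and let ρA ∈ Ω_m, ρB ∈ Ω_n. Then strong duality holds for quantum optimal transport: T_C(ρA, ρB) = sup { Re(trace(σA * ρA)) + Re(trace(σB * ρB)) : σA a Hermitian m×m matrix, σB a Hermitian n×n matrix, such that C − σA ⊗ 1_n − 1_m ⊗ σB is positive semidefinite }, where σA ⊗ 1_n and 1_m ⊗ σB are Kronecker products indexed by Fin m × Fin n. Moreover, if ρA and ρB are positive definite, then this supremum is attained: there exist Hermitian σA, σB with C − σA ⊗ 1_n − 1_m ⊗ σB positive semidefinite and T_C(ρA, ρB) = Re(trace(σA * ρA)) + Re(trace(σB * ρB)). -/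

import Mathlib

open Matrix ComplexOrder

/-- A density matrix: positive semidefinite with trace one. -/
def IsDensityMatrix {k : Type*} [Fintype k] [DecidableEq k] (ρ : Matrix k k ℂ) : Prop :=
  ρ.PosSemidef ∧ ρ.trace = 1

/-- Partial trace over the second factor. -/
noncomputable def trB {m n : ℕ} (R : Matrix (Fin m × Fin n) (Fin m × Fin n) ℂ) :
    Matrix (Fin m) (Fin m) ℂ :=
  Matrix.of fun i j => ∑ p, R (i, p) (j, p)

/-- Partial trace over the first factor. -/
noncomputable def trA {m n : ℕ} (R : Matrix (Fin m × Fin n) (Fin m × Fin n) ℂ) :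
    Matrix (Fin n) (Fin n) ℂ :=
  Matrix.of fun p q => ∑ i, R (i, p) (i, q)

/-- The set of quantum couplings of two density matrices. -/
def QCouplings {m n : ℕ} (ρA : Matrix (Fin m) (Fin m) ℂ) (ρB : Matrix (Fin n) (Fin n) ℂ) :
    Set (Matrix (Fin m × Fin n) (Fin m × Fin n) ℂ) :=
  {R | IsDensityMatrix R ∧ trB R = ρA ∧ trA R = ρB}

/-- The quantum optimal transport cost. -/
noncomputable def QOT {m n : ℕ} (C : Matrix (Fin m × Fin n) (Fin m × Fin n) ℂ)
    (ρA : Matrix (Fin m) (Fin m) ℂ) (ρB : Matrix (Fin n) (Fin n) ℂ) : ℝ :=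
  sInf ((fun R => ((C * R).trace).re) '' QCouplings ρA ρB)

/-- The SWAP matrix on `Fin n × Fin n`. -/
noncomputable def swapM (n : ℕ) : Matrix (Fin n × Fin n) (Fin n × Fin n) ℂ :=
  Matrix.of fun x y => if x.1 = y.2 ∧ x.2 = y.1 then 1 else 0

/-- The quantum cost matrix `C^Q = (1/2) (I - S)`. -/
noncomputable def CQ (n : ℕ) : Matrix (Fin n × Fin n) (Fin n × Fin n) ℂ :=
  (1 / 2 : ℂ) • (1 - swapM n)

/-- Kronecker product of square matrices indexed by `Fin m` and `Fin n`. -/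
noncomputable def kron {m n : ℕ} (A : Matrix (Fin m) (Fin m) ℂ)
    (B : Matrix (Fin n) (Fin n) ℂ) : Matrix (Fin m × Fin n) (Fin m × Fin n) ℂ :=
  Matrix.of fun x y => A x.1 y.1 * B x.2 y.2

/-!
Hahn–Banach separates the image of the compact convex set of density matrices under
(marginals, cost) from the ray below `((ρA, ρB), t)`; for every `t < T_C(ρA, ρB)` this yields a
dual feasible pair of value `t`, so there is no gap. When `ρA` and `ρB` are positive definite,
`ρA ⊗ ρB` is an order unit of the Hermitian matrices (Slater's condition), and the M. Riesz
extension theorem produces a multiplier of value exactly `T_C(ρA, ρB)`.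
-/

theorem exists_lagrange_multiplier_of_isCompact {E F : Type*}
    [AddCommGroup E] [Module ℝ E] [TopologicalSpace E]
    [AddCommGroup F] [Module ℝ F] [TopologicalSpace F] [IsTopologicalAddGroup F]
    [ContinuousSMul ℝ F] [LocallyConvexSpace ℝ F] [T1Space F]
    {s : Set E} (hs : Convex ℝ s) (hsc : IsCompact s) (φ : E →L[ℝ] F) (c : E →L[ℝ] ℝ)
    {x₀ : E} (hx₀ : x₀ ∈ s) {t : ℝ} (ht : ∀ x ∈ s, φ x = φ x₀ → t < c x) :
    ∃ y : F →L[ℝ] ℝ, ∀ x ∈ s, t + y (φ x - φ x₀) < c x := by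
  have hdisj : Disjoint ({φ x₀} ×ˢ Set.Iic t) (φ.prod c '' s) := by
    rw [Set.disjoint_left]
    rintro _ ⟨hφ, hle⟩ ⟨x, hx, rfl⟩
    exact (ht x hx hφ).not_ge hle
  obtain ⟨f, u, v, hray, huv, himage⟩ := geometric_hahn_banach_closed_compact
    ((convex_singleton (φ x₀)).prod (convex_Iic t)) (isClosed_singleton.prod isClosed_Iic)
    (hs.linear_image (φ.prod c).toLinearMap) (hsc.image (φ.prod c).continuous) hdisj
  set η : ℝ := f (0, 1)
  let z : F →L[ℝ] ℝ := f.comp (.inl ℝ F ℝ)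
  have hf_apply (b : F) (r : ℝ) : f (b, r) = z b + r * η := by
    rw [← smul_eq_mul, ← map_smul, ContinuousLinearMap.comp_apply, ← map_add]
    simp
  have hsep : ∀ x ∈ s, z (φ x₀) + t * η < z (φ x) + c x * η := fun x hx => by
    rw [← hf_apply, ← hf_apply]
    exact (hray (φ x₀, t) ⟨rfl, le_refl t⟩).trans (huv.trans (himage _ ⟨x, hx, rfl⟩))
  have hη : 0 < η := by
    have : t * η < c x₀ * η := lt_of_add_lt_add_left (hsep x₀ hx₀)
    nlinarith [ht x₀ hx₀ rfl]
  refine ⟨-η⁻¹ • z, fun x hx => ?_⟩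
  have hgap : (z (φ x₀) - z (φ x)) / η < c x - t := by
    rw [div_lt_iff₀ hη]
    linarith [hsep x hx]
  calc t + (-η⁻¹ • z) (φ x - φ x₀) = t + (z (φ x₀) - z (φ x)) / η := by
        rw [_root_.smul_apply, map_sub, smul_eq_mul]
        ring
    _ < c x := by linarith

theorem exists_forall_mem_pointedCone_le_of_nonneg_on_ker {E F : Type*} [AddCommGroup E]
    [Module ℝ E] [AddCommGroup F] [Module ℝ F] (K : PointedCone ℝ E) (φ : E →ₗ[ℝ] F)
    (c : E →ₗ[ℝ] ℝ) (hK : ∀ x, ∃ z ∈ LinearMap.ker φ, z + x ∈ K)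
    (hc : ∀ x ∈ K, φ x = 0 → 0 ≤ c x) : ∃ y : F →ₗ[ℝ] ℝ, ∀ x ∈ K, y (φ x) ≤ c x := by
  obtain ⟨g, hg_ker, hg_nonneg⟩ := riesz_extension K
    ⟨LinearMap.ker φ, c.domRestrict (LinearMap.ker φ)⟩ (fun x hx => hc x hx x.2)
    (fun x => let ⟨z, hz, hzx⟩ := hK x; ⟨⟨z, hz⟩, hzx⟩)
  -- `c - g` vanishes on `ker φ`, hence factors through `φ`.
  have hrange : c - g ∈ LinearMap.range φ.dualMap := by
    rw [LinearMap.range_dualMap_eq_dualAnnihilator_ker, Submodule.mem_dualAnnihilator]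
    exact fun x hx => sub_eq_zero.mpr (hg_ker ⟨x, hx⟩).symm
  obtain ⟨y, hy⟩ := hrange
  refine ⟨y, fun x hx => ?_⟩
  have hyx : y (φ x) = c x - g x := DFunLike.congr_fun hy x
  linarith [hg_nonneg x hx]

theorem exists_lagrange_multiplier_of_slater {E F : Type*} [AddCommGroup E] [Module ℝ E]
    [AddCommGroup F] [Module ℝ F] (K : PointedCone ℝ E) (φ : E →ₗ[ℝ] F) (c : E →ₗ[ℝ] ℝ)
    {x₀ : E} (hx₀ : ∀ x, ∃ r : ℝ, r • x₀ + x ∈ K) {t : ℝ}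
    (ht : ∀ x ∈ K, ∀ r : ℝ, φ x = r • φ x₀ → r * t ≤ c x) :
    ∃ y : F →ₗ[ℝ] ℝ, y (φ x₀) = t ∧ ∀ x ∈ K, y (φ x) ≤ c x := by
  let ψ : E × ℝ →ₗ[ℝ] F := φ.coprod (-LinearMap.toSpanSingleton ℝ F (φ x₀))
  let gap : E × ℝ →ₗ[ℝ] ℝ := c.coprod (-LinearMap.toSpanSingleton ℝ ℝ t)
  have hψ (x : E) (r : ℝ) : ψ (x, r) = φ x - r • φ x₀ := (sub_eq_add_neg _ _).symm
  have hgap (x : E) (r : ℝ) : gap (x, r) = c x - r * t := (sub_eq_add_neg _ _).symm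
  obtain ⟨y, hy⟩ := exists_forall_mem_pointedCone_le_of_nonneg_on_ker (K.prod ⊤) ψ gap
    (fun ⟨x, r⟩ => by
      obtain ⟨a, ha⟩ := hx₀ x
      refine ⟨(a • x₀, a), ?_, ha, trivial⟩
      rw [LinearMap.mem_ker, hψ, map_smul, sub_self])
    (fun ⟨x, r⟩ ⟨hx, _⟩ hker => by
      rw [hψ, sub_eq_zero] at hker
      rw [hgap, sub_nonneg]
      exact ht x hx r hker)
  have hbound {x : E} (hx : x ∈ K) (r : ℝ) : y (φ x) - r * y (φ x₀) ≤ c x - r * t := by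
    rw [← hgap, ← smul_eq_mul, ← map_smul, ← map_sub, ← hψ]
    exact hy (x, r) ⟨hx, trivial⟩
  have hzero (r : ℝ) : r * t ≤ r * y (φ x₀) := by
    simpa using hbound K.zero_mem r
  exact ⟨y, by linarith [hzero 1, hzero (-1)], fun x hx => by linarith [hbound hx 0]⟩

section PosSemidef

variable {k 𝕜 : Type*} [Fintype k] [RCLike 𝕜]

open scoped MatrixOrder in
theorem trace_mul_nonneg_of_posSemidef {A B : Matrix k k 𝕜} (hA : A.PosSemidef)
    (hB : B.PosSemidef) : 0 ≤ (A * B).trace := by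
  classical
  obtain ⟨D, rfl⟩ := CStarAlgebra.nonneg_iff_eq_star_mul_self.mp hA.nonneg
  rw [Matrix.mul_assoc, trace_mul_comm]
  exact (hB.mul_mul_conjTranspose_same D).trace_nonneg

theorem posSemidef_iff_forall_re_trace_mul_nonneg {H : Matrix k k 𝕜} (hH : H.IsHermitian) :
    H.PosSemidef ↔ ∀ R : Matrix k k 𝕜, R.PosSemidef → 0 ≤ RCLike.re (H * R).trace := by
  refine ⟨fun h R hR => (RCLike.nonneg_iff.mp (trace_mul_nonneg_of_posSemidef h hR)).1,
    fun h => .of_dotProduct_mulVec_nonneg hH fun x => ?_⟩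
  have hx := h _ (posSemidef_vecMulVec_self_star x)
  rw [mul_vecMulVec, trace_vecMulVec, dotProduct_comm] at hx
  exact RCLike.nonneg_iff.mpr ⟨hx, hH.im_star_dotProduct_mulVec_self x⟩

theorem exists_isHermitian_forall_eq_re_trace_mul (f : Matrix k k 𝕜 →ₗ[ℝ] ℝ) :
    ∃ σ : Matrix k k 𝕜, σ.IsHermitian ∧
      ∀ X : Matrix k k 𝕜, X.IsHermitian → f X = RCLike.re (σ * X).trace := by
  let V := selfAdjoint.submodule ℝ (Matrix k k 𝕜)
  let pairing : V →ₗ[ℝ] Module.Dual ℝ V := LinearMap.mk₂ ℝ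
    (fun σ X => RCLike.re ((σ : Matrix k k 𝕜) * (X : Matrix k k 𝕜)).trace)
    (fun _ _ _ => by simp [Matrix.add_mul]) (fun _ _ _ => by simp [RCLike.smul_re])
    (fun _ _ _ => by simp [Matrix.mul_add]) (fun _ _ _ => by simp [RCLike.smul_re])
  have hinj : Function.Injective pairing := by
    refine LinearMap.ker_eq_bot.mp (LinearMap.ker_eq_bot'.mpr fun σ hσ => ?_)
    have hre : RCLike.re ((σ : Matrix k k 𝕜)ᴴ * σ).trace = 0 := by
      rw [show (σ : Matrix k k 𝕜)ᴴ = σ from σ.2]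
      exact DFunLike.congr_fun hσ σ
    have hnonneg := (posSemidef_conjTranspose_mul_self (σ : Matrix k k 𝕜)).trace_nonneg
    exact Subtype.ext (trace_conjTranspose_mul_self_eq_zero_iff.mp
      (RCLike.ext (by simpa using hre) (by simpa using (RCLike.nonneg_iff.mp hnonneg).2)))
  obtain ⟨σ, hσ⟩ := (LinearMap.injective_iff_surjective_of_finrank_eq_finrank
    Subspace.dual_finrank_eq.symm).mp hinj (f ∘ₗ V.subtype)
  exact ⟨σ, σ.2, fun X hX => (DFunLike.congr_fun hσ ⟨X, hX⟩).symm⟩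

theorem isCompact_setOf_trace_conjTranspose_mul_self_eq_one :
    IsCompact {D : Matrix k k 𝕜 | (Dᴴ * D).trace = 1} := by
  have hbox : IsCompact (Set.univ.pi fun _ => Set.univ.pi fun _ => Metric.closedBall 0 1 :
      Set (k → k → 𝕜)) :=
    isCompact_univ_pi fun _ => isCompact_univ_pi fun _ => isCompact_closedBall 0 1
  refine hbox.of_isClosed_subset (isClosed_eq
    (continuous_id.matrix_conjTranspose.matrix_mul continuous_id).matrix_trace
    continuous_const) fun (D : Matrix k k 𝕜) hD i _ j _ => ?_
  have hsum : ∑ q, ∑ p, ‖D p q‖ ^ 2 = 1 := by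
    have hD' : (((∑ q, ∑ p, ‖D p q‖ ^ 2 : ℝ)) : 𝕜) = 1 := by
      rw [← show (Dᴴ * D).trace = 1 from hD]
      simp [Matrix.trace, Matrix.mul_apply, RCLike.conj_mul]
    exact_mod_cast hD'
  have hle : ‖D i j‖ ^ 2 ≤ 1 := hsum ▸
    (Finset.single_le_sum (fun p _ => sq_nonneg ‖D p j‖) (Finset.mem_univ i)).trans
      (Finset.single_le_sum (f := fun q => ∑ p, ‖D p q‖ ^ 2)
        (fun q _ => Finset.sum_nonneg fun p _ => sq_nonneg _) (Finset.mem_univ j))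
  rw [mem_closedBall_zero_iff]
  exact (sq_le_one_iff₀ (norm_nonneg _)).mp hle

end PosSemidef

/-- The cone of positive semidefinite matrices in the real vector space of Hermitian matrices,
where every positive definite matrix is an order unit. -/
def psdCone (k 𝕜 : Type*) [RCLike 𝕜] :
    PointedCone ℝ (selfAdjoint.submodule ℝ (Matrix k k 𝕜)) where
  carrier := {X | (X : Matrix k k 𝕜).PosSemidef}
  add_mem' hX hY := hX.add hY
  zero_mem' := .zero
  smul_mem' r _ hX := hX.smul r.2

open scoped MatrixOrder Matrix.Norms.L2Operator in
theorem exists_smul_add_posSemidef {k : Type*} [Finite k] {R Y : Matrix k k ℂ}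
    (hR : R.PosDef) (hY : Y.IsHermitian) : ∃ r : ℝ, (r • R + Y).PosSemidef := by
  classical
  have := Fintype.ofFinite k
  cases isEmpty_or_nonempty k
  · exact ⟨0, by rw [Subsingleton.elim (_ + Y) 0]; exact .zero⟩
  have hRpos : IsStrictlyPositive R := isStrictlyPositive_iff_posDef.mpr hR
  obtain ⟨ε, hε, hεR⟩ := (CFC.exists_pos_algebraMap_le_iff hRpos.isSelfAdjoint).mpr
    fun _ => hRpos.spectrum_pos
  have hYnorm : -algebraMap ℝ (Matrix k k ℂ) ‖Y‖ ≤ Y :=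
    IsSelfAdjoint.neg_algebraMap_norm_le_self hY
  have hY_add : (Y + ‖Y‖ • (1 : Matrix k k ℂ)).PosSemidef := by
    rw [← nonneg_iff_posSemidef, ← neg_le_iff_add_nonneg, ← Algebra.algebraMap_eq_smul_one]
    exact hYnorm
  have hR_sub : (R - ε • (1 : Matrix k k ℂ)).PosSemidef := by
    rw [← Algebra.algebraMap_eq_smul_one]
    exact hεR
  have hsplit : (‖Y‖ / ε) • R + Y =
      (‖Y‖ / ε) • (R - ε • (1 : Matrix k k ℂ)) + (Y + ‖Y‖ • (1 : Matrix k k ℂ)) := by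
    rw [smul_sub, smul_smul, div_mul_cancel₀ _ hε.ne']
    abel
  exact ⟨‖Y‖ / ε, hsplit ▸ (hR_sub.smul (by positivity)).add hY_add⟩

section DensityMatrix

variable {k : Type*} [Fintype k] [DecidableEq k]

theorem isDensityMatrix_smul_inv_trace {R : Matrix k k ℂ} (hR : R.PosSemidef) (hR₀ : R ≠ 0) :
    IsDensityMatrix (R.trace.re⁻¹ • R) := by
  have htr : (R.trace.re : ℂ) = R.trace :=
    Complex.ext rfl (Complex.nonneg_iff.mp hR.trace_nonneg).2
  refine ⟨hR.smul (inv_nonneg.mpr (Complex.nonneg_iff.mp hR.trace_nonneg).1), ?_⟩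
  rw [trace_smul, Complex.real_smul, Complex.ofReal_inv, htr,
    inv_mul_cancel₀ (hR.trace_eq_zero_iff.not.mpr hR₀)]

/-- The real-linear functional `R ↦ Re tr(M R)`; for `M = C` it is the transport cost. -/
noncomputable def reTraceMul (M : Matrix k k ℂ) : Matrix k k ℂ →ₗ[ℝ] ℝ :=
  Complex.reLm ∘ₗ traceLinearMap k ℝ ℂ ∘ₗ LinearMap.mulLeft ℝ M

theorem nonneg_of_forall_isDensityMatrix {f : Matrix k k ℂ →ₗ[ℝ] ℝ}
    (hf : ∀ R, IsDensityMatrix R → 0 ≤ f R) {R : Matrix k k ℂ} (hR : R.PosSemidef) : 0 ≤ f R := by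
  by_cases hR₀ : R = 0
  · rw [hR₀, map_zero]
  have htr : 0 < R.trace.re :=
    (Complex.pos_iff.mp (hR.trace_nonneg.lt_of_ne' (hR.trace_eq_zero_iff.not.mpr hR₀))).1
  have hscaled := hf _ (isDensityMatrix_smul_inv_trace hR hR₀)
  rw [map_smul, smul_eq_mul] at hscaled
  exact nonneg_of_mul_nonneg_right hscaled (inv_pos.mpr htr)

theorem convex_setOf_isDensityMatrix : Convex ℝ {R : Matrix k k ℂ | IsDensityMatrix R} := by
  rintro R ⟨hR, hRt⟩ R' ⟨hR', hRt'⟩ a b ha hb hab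
  refine ⟨(hR.smul ha).add (hR'.smul hb), ?_⟩
  rw [trace_add, trace_smul, trace_smul, hRt, hRt', ← add_smul, hab, one_smul]

open scoped MatrixOrder in
theorem isCompact_setOf_isDensityMatrix : IsCompact {R : Matrix k k ℂ | IsDensityMatrix R} := by
  have himage : {R : Matrix k k ℂ | IsDensityMatrix R} =
      (fun D => Dᴴ * D) '' {D | (Dᴴ * D).trace = 1} := by
    ext R
    constructor
    · rintro ⟨hR, htr⟩
      obtain ⟨D, rfl⟩ := CStarAlgebra.nonneg_iff_eq_star_mul_self.mp hR.nonneg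
      exact ⟨D, htr, rfl⟩
    · rintro ⟨D, htr, rfl⟩
      exact ⟨posSemidef_conjTranspose_mul_self D, htr⟩
  rw [himage]
  exact isCompact_setOf_trace_conjTranspose_mul_self_eq_one.image
    (continuous_id.matrix_conjTranspose.matrix_mul continuous_id)

end DensityMatrix

section Transport

variable {m n : ℕ}

theorem trace_kron_one_mul (σ : Matrix (Fin m) (Fin m) ℂ)
    (R : Matrix (Fin m × Fin n) (Fin m × Fin n) ℂ) :
    (kron σ 1 * R).trace = (σ * trB R).trace := by
  simp only [Matrix.trace, Matrix.diag_apply, Matrix.mul_apply, kron, trB, Matrix.of_apply,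
    Fintype.sum_prod_type, Matrix.one_apply, mul_ite, mul_one, mul_zero, ite_mul, zero_mul,
    Finset.sum_ite_eq, Finset.mem_univ, if_true, Finset.mul_sum]
  exact Finset.sum_congr rfl fun i _ => Finset.sum_comm

theorem trace_one_kron_mul (σ : Matrix (Fin n) (Fin n) ℂ)
    (R : Matrix (Fin m × Fin n) (Fin m × Fin n) ℂ) :
    (kron 1 σ * R).trace = (σ * trA R).trace := by
  simp only [Matrix.trace, Matrix.diag_apply, Matrix.mul_apply, kron, trA, Matrix.of_apply,
    Fintype.sum_prod_type_right, Matrix.one_apply, ite_mul, one_mul, zero_mul,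
    Finset.sum_ite_eq, Finset.mem_univ, if_true, Finset.mul_sum]
  exact Finset.sum_congr rfl fun i _ => Finset.sum_comm

theorem isHermitian_kron {A : Matrix (Fin m) (Fin m) ℂ} {B : Matrix (Fin n) (Fin n) ℂ}
    (hA : A.IsHermitian) (hB : B.IsHermitian) : (kron A B).IsHermitian := by
  ext x y
  simp [kron, ← hA.apply x.1 y.1, ← hB.apply x.2 y.2]

theorem isHermitian_trB {R : Matrix (Fin m × Fin n) (Fin m × Fin n) ℂ}
    (hR : R.IsHermitian) : (trB R).IsHermitian := by
  ext i j
  simp [trB, hR.apply]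

theorem isHermitian_trA {R : Matrix (Fin m × Fin n) (Fin m × Fin n) ℂ}
    (hR : R.IsHermitian) : (trA R).IsHermitian := by
  ext i j
  simp [trA, hR.apply]

theorem kron_mem_QCouplings {ρA : Matrix (Fin m) (Fin m) ℂ} {ρB : Matrix (Fin n) (Fin n) ℂ}
    (hA : IsDensityMatrix ρA) (hB : IsDensityMatrix ρB) : kron ρA ρB ∈ QCouplings ρA ρB := by
  have hA' : ∑ i, ρA i i = 1 := hA.2
  have hB' : ∑ i, ρB i i = 1 := hB.2
  refine ⟨⟨hA.1.kronecker hB.1, ?_⟩, ?_, ?_⟩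
  · exact (trace_kronecker ρA ρB).trans (by rw [hA.2, hB.2, one_mul])
  · ext i j
    simp [trB, kron, ← Finset.mul_sum, hB']
  · ext i j
    simp [trA, kron, ← Finset.sum_mul, hA']

theorem trace_trB (R : Matrix (Fin m × Fin n) (Fin m × Fin n) ℂ) : (trB R).trace = R.trace :=
  (Fintype.sum_prod_type fun x => R x x).symm

/-- The pair of marginals `(tr_B R, tr_A R)`: the constraint map of the transport problem, as a
real-linear map. -/
noncomputable def marginals : Matrix (Fin m × Fin n) (Fin m × Fin n) ℂ →ₗ[ℝ]
    Matrix (Fin m) (Fin m) ℂ × Matrix (Fin n) (Fin n) ℂ where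
  toFun R := (trB R, trA R)
  map_add' R R' := by ext <;> simp [trB, trA, Finset.sum_add_distrib]
  map_smul' a R := by ext <;> simp [trB, trA, Finset.mul_sum]

theorem mem_QCouplings_iff {R : Matrix (Fin m × Fin n) (Fin m × Fin n) ℂ}
    {ρA : Matrix (Fin m) (Fin m) ℂ} {ρB : Matrix (Fin n) (Fin n) ℂ} :
    R ∈ QCouplings ρA ρB ↔ IsDensityMatrix R ∧ marginals R = (ρA, ρB) :=
  and_congr_right' Prod.mk_inj.symm

/-- `r` is the value at `(ρA, ρB)` of a feasible pair of dual variables; the dual problem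
is the supremum of these `r`. -/
def IsDualValue (C : Matrix (Fin m × Fin n) (Fin m × Fin n) ℂ) (ρA : Matrix (Fin m) (Fin m) ℂ)
    (ρB : Matrix (Fin n) (Fin n) ℂ) (r : ℝ) : Prop :=
  ∃ (σA : Matrix (Fin m) (Fin m) ℂ) (σB : Matrix (Fin n) (Fin n) ℂ),
    σA.IsHermitian ∧ σB.IsHermitian ∧
    (C - kron σA 1 - kron 1 σB).PosSemidef ∧
    r = ((σA * ρA).trace).re + ((σB * ρB).trace).re

theorem re_trace_slack_mul (C R : Matrix (Fin m × Fin n) (Fin m × Fin n) ℂ)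
    (σA : Matrix (Fin m) (Fin m) ℂ) (σB : Matrix (Fin n) (Fin n) ℂ) :
    (((C - kron σA 1 - kron 1 σB) * R).trace).re =
      ((C * R).trace).re - (((σA * trB R).trace).re + ((σB * trA R).trace).re) := by
  rw [Matrix.sub_mul, Matrix.sub_mul, trace_sub, trace_sub, trace_kron_one_mul,
    trace_one_kron_mul, Complex.sub_re, Complex.sub_re, sub_sub]

variable {C : Matrix (Fin m × Fin n) (Fin m × Fin n) ℂ}
  {ρA : Matrix (Fin m) (Fin m) ℂ} {ρB : Matrix (Fin n) (Fin n) ℂ}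

theorem QOT_le_of_mem_QCouplings {R : Matrix (Fin m × Fin n) (Fin m × Fin n) ℂ}
    (hR : R ∈ QCouplings ρA ρB) : QOT C ρA ρB ≤ ((C * R).trace).re := by
  have hcont : Continuous (reTraceMul C) := (reTraceMul C).continuous_of_finiteDimensional
  exact csInf_le ((isCompact_setOf_isDensityMatrix.image hcont).bddBelow.mono
    (Set.image_mono fun _ h => h.1)) ⟨R, hR, rfl⟩

theorem IsDualValue.le_QOT {r : ℝ} (hr : IsDualValue C ρA ρB r) (hA : IsDensityMatrix ρA)
    (hB : IsDensityMatrix ρB) : r ≤ QOT C ρA ρB := by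
  obtain ⟨σA, σB, -, -, hslack, rfl⟩ := hr
  refine le_csInf ⟨_, _, kron_mem_QCouplings hA hB, rfl⟩ ?_
  rintro _ ⟨R, ⟨hR, rfl, rfl⟩, rfl⟩
  have hgap := (Complex.nonneg_iff.mp (trace_mul_nonneg_of_posSemidef hslack hR.1)).1
  rwa [re_trace_slack_mul, sub_nonneg] at hgap

theorem isDualValue_of_forall_le (hC : C.IsHermitian) (hA : ρA.IsHermitian) (hB : ρB.IsHermitian)
    (y : Matrix (Fin m) (Fin m) ℂ × Matrix (Fin n) (Fin n) ℂ →ₗ[ℝ] ℝ)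
    (hy : ∀ R, IsDensityMatrix R → y (marginals R) ≤ ((C * R).trace).re) :
    IsDualValue C ρA ρB (y (ρA, ρB)) := by
  obtain ⟨σA, hσA, hyA⟩ := exists_isHermitian_forall_eq_re_trace_mul (y ∘ₗ LinearMap.inl ℝ _ _)
  obtain ⟨σB, hσB, hyB⟩ := exists_isHermitian_forall_eq_re_trace_mul (y ∘ₗ LinearMap.inr ℝ _ _)
  have hy_eq {XA : Matrix (Fin m) (Fin m) ℂ} {XB : Matrix (Fin n) (Fin n) ℂ}
      (hXA : XA.IsHermitian) (hXB : XB.IsHermitian) :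
      y (XA, XB) = ((σA * XA).trace).re + ((σB * XB).trace).re := by
    rw [← LinearMap.coprod_comp_inl_inr y, LinearMap.coprod_apply, hyA XA hXA, hyB XB hXB]
    rfl
  have hslack : (C - kron σA 1 - kron 1 σB).IsHermitian :=
    (hC.sub (isHermitian_kron hσA isHermitian_one)).sub (isHermitian_kron isHermitian_one hσB)
  refine ⟨σA, σB, hσA, hσB, ?_, hy_eq hA hB⟩
  refine (posSemidef_iff_forall_re_trace_mul_nonneg hslack).mpr fun R hR =>
    nonneg_of_forall_isDensityMatrix (f := reTraceMul _) (fun R hR => ?_) hR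
  have hR_herm := hR.1.isHermitian
  calc 0 ≤ ((C * R).trace).re - y (marginals R) := sub_nonneg.mpr (hy R hR)
    _ = ((C * R).trace).re - (((σA * trB R).trace).re + ((σB * trA R).trace).re) :=
        congrArg _ (hy_eq (isHermitian_trB hR_herm) (isHermitian_trA hR_herm))
    _ = _ := (re_trace_slack_mul C R σA σB).symm

theorem isDualValue_of_lt_QOT (hC : C.IsHermitian) (hA : IsDensityMatrix ρA)
    (hB : IsDensityMatrix ρB) {t : ℝ} (ht : t < QOT C ρA ρB) : IsDualValue C ρA ρB t := by
  have hloc (k : ℕ) : LocallyConvexSpace ℝ (Matrix (Fin k) (Fin k) ℂ) :=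
    inferInstanceAs (LocallyConvexSpace ℝ (Fin k → Fin k → ℂ))
  obtain ⟨hprod, hprod_marginals⟩ := mem_QCouplings_iff.mp (kron_mem_QCouplings hA hB)
  obtain ⟨y, hy⟩ := exists_lagrange_multiplier_of_isCompact convex_setOf_isDensityMatrix
    isCompact_setOf_isDensityMatrix marginals.toContinuousLinearMap
    (reTraceMul C).toContinuousLinearMap hprod fun R hR hRm =>
      ht.trans_le (QOT_le_of_mem_QCouplings
        (mem_QCouplings_iff.mpr ⟨hR, hRm.trans hprod_marginals⟩))
  -- The affine bound becomes linear on density matrices, whose marginals have trace one.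
  let z : Matrix (Fin m) (Fin m) ℂ × Matrix (Fin n) (Fin n) ℂ →ₗ[ℝ] ℝ :=
    y.toLinearMap + (t - y (ρA, ρB)) • (reTraceMul 1 ∘ₗ LinearMap.fst ℝ _ _)
  have hz {XA : Matrix (Fin m) (Fin m) ℂ} (hXA : XA.trace = 1) (XB : Matrix (Fin n) (Fin n) ℂ) :
      z (XA, XB) = t + y ((XA, XB) - (ρA, ρB)) := by
    change y (XA, XB) + (t - y (ρA, ρB)) * ((1 * XA).trace).re = _
    rw [Matrix.one_mul, hXA, Complex.one_re, map_sub]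
    ring
  have hzt : z (ρA, ρB) = t := by rw [hz hA.2, sub_self, map_zero, add_zero]
  rw [← hzt]
  refine isDualValue_of_forall_le hC hA.1.isHermitian hB.1.isHermitian z fun R hR => ?_
  have hRy : t + y (marginals R - marginals (kron ρA ρB)) < ((C * R).trace).re := hy R hR
  rw [hprod_marginals] at hRy
  exact ((hz ((trace_trB R).trans hR.2) (trA R)).trans_lt hRy).le

theorem mul_QOT_le_of_posSemidef (hA : IsDensityMatrix ρA)
    {R : Matrix (Fin m × Fin n) (Fin m × Fin n) ℂ} (hR : R.PosSemidef) {r : ℝ}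
    (hRm : marginals R = r • (ρA, ρB)) : r * QOT C ρA ρB ≤ ((C * R).trace).re := by
  have htr : R.trace = r := by
    rw [← trace_trB, show trB R = r • ρA from congrArg Prod.fst hRm, trace_smul, hA.2]
    simp
  rcases eq_or_ne R 0 with rfl | hR₀
  · have hr : r = 0 := by simpa using htr.symm
    simp [hr]
  have hr : 0 < r := by
    simpa [htr] using hR.trace_nonneg.lt_of_ne' (hR.trace_eq_zero_iff.not.mpr hR₀)
  have hcoupling : r⁻¹ • R ∈ QCouplings ρA ρB := by
    refine mem_QCouplings_iff.mpr ⟨?_, ?_⟩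
    · simpa [htr] using isDensityMatrix_smul_inv_trace hR hR₀
    · rw [map_smul, hRm, inv_smul_smul₀ hr.ne']
  calc r * QOT C ρA ρB ≤ r * reTraceMul C (r⁻¹ • R) :=
        mul_le_mul_of_nonneg_left (QOT_le_of_mem_QCouplings hcoupling) hr.le
    _ = ((C * R).trace).re := by
        rw [map_smul, smul_eq_mul, mul_inv_cancel_left₀ hr.ne']
        rfl

theorem isDualValue_QOT (hC : C.IsHermitian) (hA : IsDensityMatrix ρA) (hB : IsDensityMatrix ρB)
    (hA' : ρA.PosDef) (hB' : ρB.PosDef) : IsDualValue C ρA ρB (QOT C ρA ρB) := by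
  have hprod : (kron ρA ρB).PosDef := hA'.kronecker hB'
  have hprod_marginals : marginals (kron ρA ρB) = (ρA, ρB) :=
    (mem_QCouplings_iff.mp (kron_mem_QCouplings hA hB)).2
  let V := selfAdjoint.submodule ℝ (Matrix (Fin m × Fin n) (Fin m × Fin n) ℂ)
  obtain ⟨y, hyt, hy⟩ := exists_lagrange_multiplier_of_slater (psdCone (Fin m × Fin n) ℂ)
    (marginals ∘ₗ V.subtype) (reTraceMul C ∘ₗ V.subtype) (x₀ := ⟨_, hprod.isHermitian⟩)
    (fun X => exists_smul_add_posSemidef hprod X.2) (t := QOT C ρA ρB)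
    (fun R hR r hRm => mul_QOT_le_of_posSemidef hA hR (hRm.trans (congrArg _ hprod_marginals)))
  have hyQ : y (ρA, ρB) = QOT C ρA ρB := hprod_marginals ▸ hyt
  rw [← hyQ]
  exact isDualValue_of_forall_le hC hA'.isHermitian hB'.isHermitian y fun R hR =>
    hy ⟨R, hR.1.isHermitian⟩ hR.1

theorem isLUB_setOf_isDualValue (hC : C.IsHermitian) (hA : IsDensityMatrix ρA)
    (hB : IsDensityMatrix ρB) : IsLUB {r | IsDualValue C ρA ρB r} (QOT C ρA ρB) :=
  ⟨fun _ hr => hr.le_QOT hA hB,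
    fun _ hb => le_of_forall_lt_imp_le_of_dense fun _ ht => hb (isDualValue_of_lt_QOT hC hA hB ht)⟩

end Transport

/-- strong duality for the quantum optimal transport SDP, with
attainment of the supremum when both marginals are positive definite. -/
theorem qot_strong_duality (m n : ℕ)
    (C : Matrix (Fin m × Fin n) (Fin m × Fin n) ℂ) (hC : C.IsHermitian)
    (ρA : Matrix (Fin m) (Fin m) ℂ) (ρB : Matrix (Fin n) (Fin n) ℂ)
    (hA : IsDensityMatrix ρA) (hB : IsDensityMatrix ρB) :
    QOT C ρA ρB =
      sSup {r : ℝ |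
        ∃ (σA : Matrix (Fin m) (Fin m) ℂ) (σB : Matrix (Fin n) (Fin n) ℂ),
          σA.IsHermitian ∧ σB.IsHermitian ∧
          (C - kron σA 1 - kron 1 σB).PosSemidef ∧
          r = ((σA * ρA).trace).re + ((σB * ρB).trace).re} ∧
    (ρA.PosDef → ρB.PosDef →
      ∃ (σA : Matrix (Fin m) (Fin m) ℂ) (σB : Matrix (Fin n) (Fin n) ℂ),
        σA.IsHermitian ∧ σB.IsHermitian ∧
        (C - kron σA 1 - kron 1 σB).PosSemidef ∧
        QOT C ρA ρB = ((σA * ρA).trace).re + ((σB * ρB).trace).re) := by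
  have hlub := isLUB_setOf_isDualValue hC hA hB
  have hne : {r | IsDualValue C ρA ρB r}.Nonempty :=
    ⟨_, isDualValue_of_lt_QOT hC hA hB (sub_one_lt _)⟩
  exact ⟨(hlub.csSup_eq hne).symm, isDualValue_QOT hC hA hB⟩
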